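/- Assume the hypotheses of the Weierstrass canonical form with z_j ∉ {λ_1,…,λ_r} for all j. Define f(λ) := Σ_{j=1}^N ω_j/(z_j − λ), for each i ≤ r the row vector f_0(λ_i) ∈ ℂ^{1×n_i} with (f_0(λ_i))_p = Σ_{j=1}^N ω_j/(z_j − λ_i)^p, F_{1:r} := T_{n_1}(f_0(λ_1)) ⊕ ⋯ ⊕ T_{n_r}(f_0(λ_r)), and the filter operator P̂ := Q_{1:r} F_{1:r} Q̃_{1:r}^H ∈ ℂ^{n×n}. Then every eigenvalue of P̂ lies in the set {0} ∪ {f(λ_1), …, f(λ_r)}. -/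

import Mathlib

noncomputable section
open Matrix

/-- The `n×n` Jordan block with eigenvalue `l`: diagonal entries `l`,
superdiagonal entries `1`, all other entries `0`. -/
def jordanBlock (n : ℕ) (l : ℂ) : Matrix (Fin n) (Fin n) ℂ :=
  Matrix.of fun p q : Fin n =>
    if (q : ℕ) = (p : ℕ) then l else if (q : ℕ) = (p : ℕ) + 1 then 1 else 0

/-- The `n×n` upper triangular Toeplitz matrix `T_n(a)` whose `(p,q)` entry is
`a_{q−p+1}` (1-indexed), i.e. `a (q−p)` (0-indexed) for `q ≥ p`, and `0` otherwise. -/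
def toeplitzU (n : ℕ) (a : Fin n → ℂ) : Matrix (Fin n) (Fin n) ℂ :=
  Matrix.of fun p q : Fin n =>
    if (p : ℕ) ≤ (q : ℕ) then a ⟨(q : ℕ) - (p : ℕ), lt_of_le_of_lt (Nat.sub_le _ _) q.isLt⟩
    else 0

/-- The filter operator `P̂ := Q_{1:r} F_{1:r} Q̃_{1:r}ᴴ`, where
`F_{1:r} = T_{n_1}(f_0(λ_1)) ⊕ ⋯ ⊕ T_{n_r}(f_0(λ_r))` and
`(f_0(λ_i))_p = ∑_j ω_j/(z_j − λ_i)^p`. -/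
def filterOp (N : ℕ) (z omega : Fin N → ℂ)
    (d : ℕ) (ni : Fin d → ℕ) (r : ℕ) (lam : Fin d → ℂ)
    (Q : Matrix ((i : Fin d) × Fin (ni i)) ((i : Fin d) × Fin (ni i)) ℂ) :
    Matrix ((i : Fin d) × Fin (ni i)) ((i : Fin d) × Fin (ni i)) ℂ :=
  Q.submatrix id (Subtype.val : {x : (i : Fin d) × Fin (ni i) // (x.1 : ℕ) < r} → _) *
    (Matrix.blockDiagonal' (fun i => toeplitzU (ni i)
      (fun p => ∑ j, omega j / (z j - lam i) ^ ((p : ℕ) + 1)))).submatrix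
      (Subtype.val : {x : (i : Fin d) × Fin (ni i) // (x.1 : ℕ) < r} → _) Subtype.val *
    (Q⁻¹).submatrix (Subtype.val : {x : (i : Fin d) × Fin (ni i) // (x.1 : ℕ) < r} → _) id

/-! Restricting to the blocks `i ≤ r` amounts to replacing the other diagonal blocks by `0`, so `P̂`
is similar to the full block diagonal matrix with blocks `T_{n_i}(f_0(λ_i))` for `i ≤ r` and `0` for
`i > r`. All these blocks are upper triangular, and the diagonal of a Toeplitz block is constant,
equal to its first coefficient `f(λ_i)`. -/

theorem spectrum_blockDiagonal'_subset {R A ι : Type*} [CommSemiring R] [Ring A] [Algebra R A]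
    [Fintype ι] [DecidableEq ι] {m : ι → Type*} [∀ i, Fintype (m i)] [∀ i, DecidableEq (m i)]
    (M : ∀ i, Matrix (m i) (m i) A) :
    spectrum R (blockDiagonal' M) ⊆ ⋃ i, spectrum R (M i) := by
  let blockDiagonalHom := AlgHom.mk' (blockDiagonal'RingHom m A) (blockDiagonal'_smul (R := R))
  rw [← Pi.spectrum_eq]
  exact AlgHom.spectrum_apply_subset blockDiagonalHom M

theorem spectrum_of_isUpperTriangular {K n : Type*} [Field K] [Fintype n] [LinearOrder n]
    {M : Matrix n n K} (hM : M.IsUpperTriangular) : spectrum K M = Set.range M.diag := by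
  ext μ
  rw [mem_spectrum_iff_isRoot_charpoly, charpoly_of_isUpperTriangular M hM, Polynomial.isRoot_prod]
  simp [sub_eq_zero, eq_comm]

theorem spectrum_conj_of_isUnit {R S n : Type*} [CommSemiring R] [CommRing S] [Algebra R S]
    [Fintype n] [DecidableEq n] {Q : Matrix n n S} (hQ : IsUnit Q) (M : Matrix n n S) :
    spectrum R (Q * M * Q⁻¹) = spectrum R M := by
  obtain ⟨u, rfl⟩ := hQ
  rw [← coe_units_inv, spectrum.units_conjugate]

section Restriction

variable {R k l : Type*} [NonUnitalSemiring R]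

theorem submatrix_val_mul_submatrix_val {n : Type*} [Fintype n] {p : n → Prop} [DecidablePred p]
    {A : Matrix k n R} {B : Matrix n l R} (h : ∀ a j b, ¬ p j → A a j * B j b = 0) :
    A.submatrix id (Subtype.val : {j // p j} → n) * B.submatrix (Subtype.val : {j // p j} → n) id =
      A * B := by
  ext a b
  have hcompl : ∑ j : {j // ¬ p j}, A a j * B j b = 0 :=
    Finset.sum_eq_zero fun j _ => h a j b j.2
  simpa [hcompl, mul_apply] using Fintype.sum_subtype_add_sum_subtype p fun j => A a j * B j b

theorem submatrix_val_mul_mul_submatrix_val {n n' : Type*} [Fintype n] [Fintype n']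
    {p : n → Prop} [DecidablePred p] {q : n' → Prop} [DecidablePred q]
    (A : Matrix k n R) {M : Matrix n n' R} (B : Matrix n' l R)
    (hrow : ∀ i j, ¬ p i → M i j = 0) (hcol : ∀ i j, ¬ q j → M i j = 0) :
    A.submatrix id (Subtype.val : {i // p i} → n) *
        M.submatrix (Subtype.val : {i // p i} → n) (Subtype.val : {j // q j} → n') *
          B.submatrix (Subtype.val : {j // q j} → n') id =
      A * M * B := by
  have hAM : A.submatrix id (Subtype.val : {i // p i} → n) *
      M.submatrix (Subtype.val : {i // p i} → n) id = A * M :=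
    submatrix_val_mul_submatrix_val fun a i j hi => by rw [hrow i j hi, mul_zero]
  have hAMB : (A * M).submatrix id (Subtype.val : {j // q j} → n') *
      B.submatrix (Subtype.val : {j // q j} → n') id = A * M * B :=
    submatrix_val_mul_submatrix_val fun a j b hj => by simp [mul_apply, hcol _ j hj]
  rw [← hAMB, ← hAM]
  rfl

end Restriction

section BlockFilter

variable {R ι : Type*} [CommRing R] [Fintype ι] [DecidableEq ι] {m : ι → Type*}
  [∀ i, Fintype (m i)] [∀ i, DecidableEq (m i)] (p : ι → Prop) [DecidablePred p]
  (Q : Matrix (Σ i, m i) (Σ i, m i) R) (T : ∀ i, Matrix (m i) (m i) R)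

/-- The filter operator `Q_p (⨁_{p i} T i) Q̃_pᴴ` with arbitrary diagonal blocks `T i`, where the
subscript `p` selects the column blocks with `p i`, and `Q̃ᴴ` is encoded as `Q⁻¹`. With `p i`
meaning `i ≤ r` and Toeplitz blocks it is `filterOp`. -/
def blockFilter : Matrix (Σ i, m i) (Σ i, m i) R :=
  Q.submatrix id (Subtype.val : {x : Σ i, m i // p x.1} → _) *
    (blockDiagonal' T).submatrix (Subtype.val : {x : Σ i, m i // p x.1} → _) Subtype.val *
    Q⁻¹.submatrix (Subtype.val : {x : Σ i, m i // p x.1} → _) id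

theorem blockFilter_eq_conj :
    blockFilter p Q T = Q * blockDiagonal' (fun i => if p i then T i else 0) * Q⁻¹ := by
  rw [blockFilter, ← submatrix_val_mul_mul_submatrix_val (p := fun x : Σ i, m i => p x.1)
    (q := fun x : Σ i, m i => p x.1) Q Q⁻¹]
  · congr 2
    ext ⟨⟨i, a⟩, hi⟩ ⟨⟨j, b⟩, hj⟩
    simp [blockDiagonal'_apply, show p i from hi]
  · rintro ⟨i, a⟩ ⟨j, b⟩ hi
    simp [blockDiagonal'_apply, show ¬ p i from hi]
  · rintro ⟨i, a⟩ ⟨j, b⟩ hj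
    rcases eq_or_ne i j with rfl | hij
    · simp [show ¬ p i from hj]
    · exact blockDiagonal'_apply_ne _ a b hij

end BlockFilter

theorem stmt_8_general {K ι : Type*} [Field K] [Fintype ι] [DecidableEq ι] {m : ι → Type*}
    [∀ i, Fintype (m i)] [∀ i, LinearOrder (m i)] {p : ι → Prop} [DecidablePred p]
    {Q : Matrix (Σ i, m i) (Σ i, m i) K} (hQ : IsUnit Q) {T : ∀ i, Matrix (m i) (m i) K}
    (hT : ∀ i, p i → (T i).IsUpperTriangular) {μ : K} (hμ : μ ∈ spectrum K (blockFilter p Q T)) :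
    μ = 0 ∨ ∃ i, p i ∧ ∃ a, μ = T i a a := by
  rw [blockFilter_eq_conj, spectrum_conj_of_isUnit hQ] at hμ
  obtain ⟨i, hi⟩ := Set.mem_iUnion.mp (spectrum_blockDiagonal'_subset _ hμ)
  have htri : (if p i then T i else 0).IsUpperTriangular := by
    split_ifs with hp
    exacts [hT i hp, blockTriangular_zero]
  rw [spectrum_of_isUpperTriangular htri] at hi
  obtain ⟨a, rfl⟩ := hi
  by_cases hp : p i
  · exact .inr ⟨i, hp, a, by simp [hp]⟩
  · exact .inl (by simp [hp])

theorem toeplitzU_isUpperTriangular (n : ℕ) (a : Fin n → ℂ) :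
    (toeplitzU n a).IsUpperTriangular :=
  fun _ _ hqp => if_neg (not_le.mpr hqp)

theorem toeplitzU_apply_self {n : ℕ} (a : Fin n → ℂ) (p : Fin n) :
    toeplitzU n a p p = a ⟨0, p.pos⟩ := by
  simp [toeplitzU]

theorem filterOp_eq_blockFilter (N : ℕ) (z omega : Fin N → ℂ) (d : ℕ) (ni : Fin d → ℕ) (r : ℕ)
    (lam : Fin d → ℂ) (Q : Matrix ((i : Fin d) × Fin (ni i)) ((i : Fin d) × Fin (ni i)) ℂ) :
    filterOp N z omega d ni r lam Q = blockFilter (fun i : Fin d => (i : ℕ) < r) Q fun i =>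
      toeplitzU (ni i) fun p => ∑ j, omega j / (z j - lam i) ^ ((p : ℕ) + 1) :=
  rfl

/-- under the Weierstrass canonical form with `z_j ∉ {λ_1,…,λ_r}`,
every eigenvalue of the filter operator `P̂ = Q_{1:r} F_{1:r} Q̃_{1:r}ᴴ` lies in
`{0} ∪ {f(λ_1), …, f(λ_r)}`, where `f(λ) = ∑_j ω_j/(z_j − λ)`. -/
theorem stmt_8 (N : ℕ) (z omega : Fin N → ℂ)
    (d : ℕ) (ni : Fin d → ℕ) (hni : ∀ i, 1 ≤ ni i) (r : ℕ) (hr : r ≤ d)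
    (lam : Fin d → ℂ)
    (A B Pt Q : Matrix ((i : Fin d) × Fin (ni i)) ((i : Fin d) × Fin (ni i)) ℂ)
    (hPt : IsUnit Pt) (hQ : IsUnit Q)
    (hA : Ptᴴ * A * Q = Matrix.blockDiagonal'
      (fun i : Fin d => if (i : ℕ) < r then jordanBlock (ni i) (lam i) else 1))
    (hB : Ptᴴ * B * Q = Matrix.blockDiagonal'
      (fun i : Fin d => if (i : ℕ) < r then 1 else jordanBlock (ni i) 0))
    (hzlam : ∀ (j : Fin N) (i : Fin d), (i : ℕ) < r → z j ≠ lam i)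
    (mu : ℂ) (hmu : mu ∈ spectrum ℂ (filterOp N z omega d ni r lam Q)) :
    mu = 0 ∨ ∃ i : Fin d, (i : ℕ) < r ∧ mu = ∑ j, omega j / (z j - lam i) := by
  rw [filterOp_eq_blockFilter] at hmu
  exact (stmt_8_general hQ (fun i _ => toeplitzU_isUpperTriangular (ni i) _) hmu).imp_right
    fun ⟨i, hi, p, hp⟩ => ⟨i, hi, by simpa [toeplitzU_apply_self] using hp⟩
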